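/- Let n ≥ 1, N ≥ 1, and let ρ : GL_n(ℂ) → GL_N(ℂ) be a group homomorphism such that: (a) each matrix entry of ρ(g) is given by a fixed polynomial in the n² entries of g and in det(g)^{−1} (ρ is a morphism of varieties); (b) there exist positive integers w₁,…,w_N with ρ(z·1_n) = diag(z^{w₁},…,z^{w_N}) for all z ∈ ℂˣ. Let w₀ ∈ ℂ^N be nonzero and suppose ρ(SL_n(ℂ))·w₀ is Zariski closed in ℂ^N. Then every point k lying in the Zariski closure of the orbit ρ(GL_n(ℂ))·w₀ but not in ρ(GL_n(ℂ))·w₀ itself is SL_n(ℂ)-unstable, i.e. the origin 0 ∈ ℂ^N lies in the Zariski closure of ρ(SL_n(ℂ))·k. -/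

import Mathlib

/-- A subset of `ℂ^N` is Zariski closed if it is the common zero set of a family of
polynomials. -/
def IsZariskiClosed {N : ℕ} (C : Set (Fin N → ℂ)) : Prop :=
  ∃ S : Set (MvPolynomial (Fin N) ℂ),
    C = {x | ∀ p ∈ S, MvPolynomial.eval x p = 0}

/-!
Suppose a polynomial `p` vanishes on `SL_n · k` but not at `0`. Averaging `p` over the compact group
`SU_n` gives an `SU_n`-invariant polynomial, which is `SL_n`-invariant because `SU_n` is Zariski
dense in `SL_n`. It still separates `k` from `0`, so one of its components `f` of weighted degree
`d > 0` does not vanish at `k`; `f` is again invariant, hence equal to a constant `c` on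
`SL_n · w₀`, and `c ≠ 0`, as otherwise `f` would vanish on `GL_n · w₀` and therefore at `k`.

The `GL_n`-orbit of `w₀` is the cone over the closed set `SL_n · w₀` under the weighted scalars. A
scalar `z` carrying a point of `SL_n · w₀` to `x` satisfies the monic equation `z ^ d = c⁻¹ f(x)`,
so the incidence variety of pairs `(x, z)` is finite over the closure of the cone, and going-up
provides a scalar `ζ` over `k`. As `ζ ^ d = c⁻¹ f(k) ≠ 0`, the point `k` lies in the cone itself.
-/

section ZariskiClosure

open MvPolynomial

variable {σ K : Type*} [Field K]

/-- The Zariski closure of a set of `K`-points of affine space. -/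
def zariskiClosure (A : Set (σ → K)) : Set (σ → K) :=
  zeroLocus K (vanishingIdeal K A)

theorem mem_zariskiClosure_iff {A : Set (σ → K)} {x : σ → K} :
    x ∈ zariskiClosure A ↔ ∀ p : MvPolynomial σ K, (∀ a ∈ A, eval a p = 0) → eval x p = 0 :=
  Iff.rfl

theorem subset_zariskiClosure (A : Set (σ → K)) : A ⊆ zariskiClosure A :=
  zeroLocus_vanishingIdeal_le A

theorem isZariskiClosed_zariskiClosure {N : ℕ} (A : Set (Fin N → ℂ)) :
    IsZariskiClosed (zariskiClosure A) :=
  ⟨vanishingIdeal ℂ A, rfl⟩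

theorem IsZariskiClosed.zariskiClosure_subset {N : ℕ} {A C : Set (Fin N → ℂ)}
    (hC : IsZariskiClosed C) (hAC : A ⊆ C) : zariskiClosure A ⊆ C := by
  obtain ⟨S, rfl⟩ := hC
  exact fun x hx p hp => hx p fun a ha => hAC ha p hp

end ZariskiClosure

section WeightedScaling

open MvPolynomial

variable {σ R : Type*} [CommSemiring R] (w : σ → ℕ)

/-- The action `z · (xᵢ) = (z ^ wᵢ xᵢ)` of the scalars on affine space with weights `w`. -/
def weightScale (z : R) (x : σ → R) : σ → R := fun i => z ^ w i * x i

/-- The polynomial `p (T ^ wᵢ Xᵢ)` in one further variable `T`, through which `p` is evaluated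
along the orbits of `weightScale w`. -/
noncomputable def weightExpansion : MvPolynomial σ R →ₐ[R] Polynomial (MvPolynomial σ R) :=
  aeval fun i => Polynomial.C (X i) * Polynomial.X ^ w i

theorem weightScale_weightScale (y z : R) (x : σ → R) :
    weightScale w y (weightScale w z x) = weightScale w (y * z) x := by
  ext i
  simp only [weightScale, mul_pow, mul_assoc]

@[simp]
theorem weightScale_one (x : σ → R) : weightScale w 1 x = x := by
  ext i
  simp only [weightScale, one_pow, one_mul]

variable {w} in
theorem weightScale_zero (hw : ∀ i, 0 < w i) (x : σ → R) : weightScale w 0 x = 0 := by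
  ext i
  simp only [weightScale, zero_pow (hw i).ne', zero_mul, Pi.zero_apply]

theorem weightScale_eq_diagonal_mulVec [Fintype σ] [DecidableEq σ] (z : R) (x : σ → R) :
    weightScale w z x = (Matrix.diagonal fun i => z ^ w i).mulVec x :=
  funext fun i => (Matrix.mulVec_diagonal (fun i => z ^ w i) x i).symm

theorem weightExpansion_C (a : R) : weightExpansion w (C a) = Polynomial.C (C a) :=
  aeval_C _ a

theorem weightExpansion_X (i : σ) :
    weightExpansion w (X i : MvPolynomial σ R) = Polynomial.C (X i) * Polynomial.X ^ w i :=
  aeval_X _ i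

theorem eval₂_weightExpansion (p : MvPolynomial σ R) (x : σ → R) (z : R) :
    (weightExpansion w p).eval₂ (eval x) z = eval (weightScale w z x) p := by
  induction p using MvPolynomial.induction_on with
  | C a => rw [weightExpansion_C, Polynomial.eval₂_C, eval_C, eval_C]
  | add p q hp hq => simp only [map_add, Polynomial.eval₂_add, hp, hq]
  | mul_X p i hp =>
    simp only [map_mul, Polynomial.eval₂_mul, hp, weightExpansion_X, Polynomial.eval₂_C,
      Polynomial.eval₂_X_pow, eval_X, weightScale, mul_comm (x i)]

theorem weightExpansion_monomial (d : σ →₀ ℕ) (a : R) :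
    weightExpansion w (monomial d a) =
      Polynomial.C (monomial d a) * Polynomial.X ^ Finsupp.weight w d := by
  simp only [monomial_eq, Finsupp.prod, map_mul, map_prod, map_pow, weightExpansion_C,
    weightExpansion_X, mul_pow, Finset.prod_mul_distrib, mul_assoc, Finsupp.weight_apply,
    Finsupp.sum, smul_eq_mul, ← pow_mul, Finset.prod_pow_eq_pow_sum, mul_comm (w _)]

theorem coeff_weightExpansion (p : MvPolynomial σ R) (j : ℕ) :
    (weightExpansion w p).coeff j = weightedHomogeneousComponent w j p := by
  classical
  induction p using MvPolynomial.induction_on' with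
  | monomial d a =>
    rw [weightExpansion_monomial, Polynomial.coeff_C_mul_X_pow]
    rw [weightedHomogeneousComponent_of_mem (isWeightedHomogeneous_monomial w d a rfl)]
  | add p q hp hq => simp only [map_add, Polynomial.coeff_add, hp, hq]

variable {w}

theorem weightExpansion_of_isWeightedHomogeneous {p : MvPolynomial σ R} {d : ℕ}
    (hp : IsWeightedHomogeneous w p d) :
    weightExpansion w p = Polynomial.C p * Polynomial.X ^ d := by
  classical
  ext1 j
  rw [coeff_weightExpansion, weightedHomogeneousComponent_of_mem hp, Polynomial.coeff_C_mul_X_pow]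

theorem eval_weightScale_of_isWeightedHomogeneous {p : MvPolynomial σ R} {d : ℕ}
    (hp : IsWeightedHomogeneous w p d) (z : R) (x : σ → R) :
    eval (weightScale w z x) p = z ^ d * eval x p := by
  rw [← eval₂_weightExpansion, weightExpansion_of_isWeightedHomogeneous hp, Polynomial.eval₂_mul,
    Polynomial.eval₂_C, Polynomial.eval₂_X_pow, mul_comm]

theorem exists_eval_weightedHomogeneousComponent_ne_zero (hw : ∀ i, 0 < w i)
    {p : MvPolynomial σ R} {x : σ → R} (h : eval x p ≠ eval 0 p) :
    ∃ d ≠ 0, eval x (weightedHomogeneousComponent w d p) ≠ 0 := by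
  contrapose! h
  have hconst : (weightExpansion w p).map (eval x) =
      Polynomial.C (eval x (weightedHomogeneousComponent w 0 p)) := by
    ext j
    rw [Polynomial.coeff_map, coeff_weightExpansion, Polynomial.coeff_C]
    split_ifs with hj
    · rw [hj]
    · exact h j hj
  have heval (z : R) :
      eval (weightScale w z x) p = eval x (weightedHomogeneousComponent w 0 p) := by
    rw [← eval₂_weightExpansion, Polynomial.eval₂_eq_eval_map, hconst, Polynomial.eval_C]
  rw [← weightScale_one w x, heval, ← heval 0, weightScale_zero hw]

theorem eval_weightedHomogeneousComponent_of_invariant {K : Type*} [Field K] [Infinite K]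
    {T : (σ → K) → σ → K}
    (hT : ∀ z ≠ 0, ∀ x, T (weightScale w z x) = weightScale w z (T x))
    {p : MvPolynomial σ K} (hp : ∀ x, eval (T x) p = eval x p) (j : ℕ) (x : σ → K) :
    eval (T x) (weightedHomogeneousComponent w j p) =
      eval x (weightedHomogeneousComponent w j p) := by
  have hmap : (weightExpansion w p).map (eval (T x)) = (weightExpansion w p).map (eval x) := by
    refine Polynomial.eq_of_infinite_eval_eq _ _
      ((Set.finite_singleton (0 : K)).infinite_compl.mono fun z hz => ?_)
    rw [Set.mem_ofPred_eq, ← Polynomial.eval₂_eq_eval_map, ← Polynomial.eval₂_eq_eval_map,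
      eval₂_weightExpansion, eval₂_weightExpansion, ← hT z hz, hp]
  simpa only [Polynomial.coeff_map, coeff_weightExpansion] using
    congrArg (Polynomial.coeff · j) hmap

end WeightedScaling

section IntegralExtension

open Polynomial

theorem exists_forall_eval_eq_zero_of_ne_top {K : Type*} [Field K] [IsAlgClosed K]
    {J : Ideal K[X]} (hJ : J ≠ ⊤) : ∃ ζ : K, ∀ q ∈ J, q.eval ζ = 0 := by
  obtain ⟨g, rfl⟩ := IsPrincipalIdealRing.principal J
  have hdeg : g.degree ≠ 0 := fun h =>
    hJ (Ideal.span_singleton_eq_top.2 (isUnit_iff_degree_eq_zero.2 h))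
  obtain ⟨ζ, hζ⟩ := IsAlgClosed.exists_root g hdeg
  exact ⟨ζ, fun q hq => hζ.dvd (Ideal.mem_span_singleton.1 hq)⟩

theorem exists_forall_eval₂_eq_zero_of_comap_C_le_ker {R K : Type*} [CommRing R] [Field K]
    [IsAlgClosed K] {φ : R →+* K} (hφ : Function.Surjective φ) {I : Ideal R[X]} {h : R[X]}
    (hmonic : h.Monic) (hI : h ∈ I) (hker : I.comap C ≤ RingHom.ker φ) :
    ∃ ζ : K, ∀ q ∈ I, q.eval₂ φ ζ = 0 := by
  have hfinite : Module.Finite R (R[X] ⧸ I) := by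
    have := hmonic.finite_quotient
    have hle := (Ideal.span_singleton_le_iff_mem I).2 hI
    exact Module.Finite.of_surjective (Ideal.Quotient.factorₐ R hle).toLinearMap
      (Ideal.Quotient.factor_surjective hle)
  have hmax := RingHom.ker_isMaximal_of_surjective φ hφ
  have hker' : RingHom.ker (algebraMap R (R[X] ⧸ I)) ≤ RingHom.ker φ := fun r hr =>
    hker (Ideal.mem_comap.2 (Ideal.Quotient.eq_zero_iff_mem.1 hr))
  have : Algebra.IsIntegral R (R[X] ⧸ I) := Algebra.IsIntegral.of_finite R _
  obtain ⟨M, hM, hMφ⟩ := Ideal.exists_ideal_over_maximal_of_isIntegral (RingHom.ker φ) hker'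
  have hle : (RingHom.ker (mapRingHom φ)) ≤ M.comap (Ideal.Quotient.mk I) := by
    rw [ker_mapRingHom, Ideal.map_le_iff_le_comap, ← hMφ]
    exact le_rfl
  have htop : I.map (mapRingHom φ) ≠ ⊤ := by
    intro h
    have hsup : I ⊔ RingHom.ker (mapRingHom φ) = ⊤ := by
      rw [← Ideal.comap_map_of_surjective' _ (map_surjective φ hφ), h, Ideal.comap_top]
    have hIM : I ≤ M.comap (Ideal.Quotient.mk I) :=
      Ideal.mk_ker.symm.trans_le (Ideal.ker_le_comap _)
    exact Ideal.comap_ne_top _ hM.ne_top (top_le_iff.1 (hsup ▸ sup_le hIM hle))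
  obtain ⟨ζ, hζ⟩ := exists_forall_eval_eq_zero_of_ne_top htop
  refine ⟨ζ, fun q hq => ?_⟩
  rw [eval₂_eq_eval_map]
  exact hζ _ (Ideal.mem_map_of_mem (mapRingHom φ) hq)

end IntegralExtension

section Cone

open MvPolynomial

variable {σ K : Type*} [Field K] {w : σ → ℕ} {A : Set (σ → K)}

variable (w A) in
/-- The cone swept out by `A` under the scalars `z ≠ 0` acting with weights `w`. -/
def weightCone : Set (σ → K) :=
  {x | ∃ z ≠ 0, ∃ a ∈ A, weightScale w z a = x}

variable (w A) in
/-- The ideal of all `q(x, T)` that vanish at `(weightScale w z a, z)` for `z ≠ 0` and `a ∈ A`. It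
encodes the incidence of cone points `x` with the scalars that carry a point of `A` to `x`. -/
noncomputable def weightConeIdeal : Ideal (Polynomial (MvPolynomial σ K)) :=
  ⨅ z ≠ (0 : K), ⨅ a ∈ A, RingHom.ker (Polynomial.eval₂RingHom (eval (weightScale w z a)) z)

theorem mem_weightConeIdeal_iff {q : Polynomial (MvPolynomial σ K)} :
    q ∈ weightConeIdeal w A ↔ ∀ z ≠ 0, ∀ a ∈ A, q.eval₂ (eval (weightScale w z a)) z = 0 := by
  simp only [weightConeIdeal, Ideal.mem_iInf, RingHom.mem_ker, Polynomial.coe_eval₂RingHom]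

theorem eval₂_reverse_weightExpansion_eq_zero_iff {z : K} (hz : z ≠ 0) (x : σ → K)
    (m : MvPolynomial σ K) :
    (weightExpansion w m).reverse.eval₂ (eval x) z = 0 ↔ eval (weightScale w z⁻¹ x) m = 0 := by
  have := invertibleOfNonzero (inv_ne_zero hz)
  rw [← eval₂_weightExpansion, ← Polynomial.eval₂_reverse_eq_zero_iff (eval x) z⁻¹, invOf_eq_inv,
    inv_inv]

theorem reverse_weightExpansion_mem_weightConeIdeal {m : MvPolynomial σ K}
    (hm : ∀ a ∈ A, eval a m = 0) : (weightExpansion w m).reverse ∈ weightConeIdeal w A := by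
  refine mem_weightConeIdeal_iff.2 fun z hz a ha => ?_
  rw [eval₂_reverse_weightExpansion_eq_zero_iff hz, weightScale_weightScale, inv_mul_cancel₀ hz,
    weightScale_one, hm a ha]

theorem X_pow_sub_C_mem_weightConeIdeal {f : MvPolynomial σ K} {d : ℕ} {c : K}
    (hf : IsWeightedHomogeneous w f d) (hc : c ≠ 0) (hfA : ∀ a ∈ A, eval a f = c) :
    Polynomial.X ^ d - Polynomial.C (C c⁻¹ * f) ∈ weightConeIdeal w A := by
  refine mem_weightConeIdeal_iff.2 fun z _ a ha => ?_
  rw [Polynomial.eval₂_sub, Polynomial.eval₂_X_pow, Polynomial.eval₂_C, map_mul, eval_C,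
    eval_weightScale_of_isWeightedHomogeneous hf, hfA a ha, mul_left_comm, inv_mul_cancel₀ hc,
    mul_one, sub_self]

theorem comap_C_weightConeIdeal_le_ker_eval {k : σ → K}
    (hk : k ∈ zariskiClosure (weightCone w A)) :
    (weightConeIdeal w A).comap Polynomial.C ≤ RingHom.ker (eval k) := by
  refine fun p hp => mem_zariskiClosure_iff.1 hk p ?_
  rintro _ ⟨z, hz, a, ha, rfl⟩
  simpa only [Polynomial.eval₂_C] using mem_weightConeIdeal_iff.1 (Ideal.mem_comap.1 hp) z hz a ha

theorem mem_weightCone_of_mem_zariskiClosure_of_eval_ne_zero [IsAlgClosed K]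
    {f : MvPolynomial σ K} {d : ℕ} {c : K} {k : σ → K} (hA : zariskiClosure A ⊆ A)
    (hf : IsWeightedHomogeneous w f d) (hd : d ≠ 0) (hfA : ∀ a ∈ A, eval a f = c)
    (hk : k ∈ zariskiClosure (weightCone w A)) (hfk : eval k f ≠ 0) : k ∈ weightCone w A := by
  have hc : c ≠ 0 := by
    rintro rfl
    refine hfk (mem_zariskiClosure_iff.1 hk f ?_)
    rintro _ ⟨z, -, a, ha, rfl⟩
    rw [eval_weightScale_of_isWeightedHomogeneous hf, hfA a ha, mul_zero]
  obtain ⟨ζ, hζ⟩ := exists_forall_eval₂_eq_zero_of_comap_C_le_ker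
    (fun y => ⟨C y, eval_C y⟩) (Polynomial.monic_X_pow_sub_C _ hd)
    (X_pow_sub_C_mem_weightConeIdeal hf hc hfA) (comap_C_weightConeIdeal_le_ker_eval hk)
  have hζd : ζ ^ d = c⁻¹ * eval k f := by
    have h := hζ _ (X_pow_sub_C_mem_weightConeIdeal hf hc hfA)
    rwa [Polynomial.eval₂_sub, Polynomial.eval₂_X_pow, Polynomial.eval₂_C, map_mul, eval_C,
      sub_eq_zero] at h
  have hζ0 : ζ ≠ 0 := ne_zero_pow hd (hζd ▸ mul_ne_zero (inv_ne_zero hc) hfk)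
  refine ⟨ζ, hζ0, weightScale w ζ⁻¹ k, hA (mem_zariskiClosure_iff.2 fun m hm => ?_), ?_⟩
  · exact (eval₂_reverse_weightExpansion_eq_zero_iff hζ0 k m).1
      (hζ _ (reverse_weightExpansion_mem_weightConeIdeal hm))
  · rw [weightScale_weightScale, mul_inv_cancel₀ hζ0, weightScale_one]

end Cone

section Averaging

open MeasureTheory MvPolynomial Matrix

variable {𝕜 Ω σ : Type*} [RCLike 𝕜] [TopologicalSpace Ω]
  [CompactSpace Ω] [MeasurableSpace Ω] [BorelSpace Ω] (μ : Measure Ω) [IsFiniteMeasure μ]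

theorem exists_eval_eq_integral_eval_map (Q : MvPolynomial σ C(Ω, 𝕜)) :
    ∃ q : MvPolynomial σ 𝕜, ∀ x, eval x q =
      ∫ u, eval x (map (ContinuousMap.evalAlgHom 𝕜 𝕜 u : C(Ω, 𝕜) →+* 𝕜) Q) ∂μ := by
  have hint (a : C(Ω, 𝕜)) : Integrable a μ :=
    a.continuous.integrable_of_hasCompactSupport (HasCompactSupport.of_compactSpace _)
  refine ⟨∑ m ∈ Q.support, monomial m (∫ u, Q.coeff m u ∂μ), fun x => ?_⟩
  simp only [eval_map, eval₂_eq, RingHom.coe_coe, ContinuousMap.evalAlgHom_apply]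
  rw [integral_finsetSum _ fun m _ => (hint (Q.coeff m)).mul_const _]
  simp only [integral_mul_const, map_sum, eval_monomial, Finsupp.prod]

theorem exists_eval_eq_integral_eval_mulVec [Fintype σ] {τ : Ω → Matrix σ σ 𝕜} (hτ : Continuous τ)
    (p : MvPolynomial σ 𝕜) :
    ∃ q : MvPolynomial σ 𝕜, ∀ x, eval x q = ∫ u, eval (τ u *ᵥ x) p ∂μ := by
  let T (i j : σ) : C(Ω, 𝕜) := ⟨fun u => τ u i j, hτ.matrix_elem i j⟩
  let Φ : MvPolynomial σ 𝕜 →ₐ[𝕜] MvPolynomial σ C(Ω, 𝕜) := aeval fun i => ∑ j, C (T i j) * X j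
  obtain ⟨q, hq⟩ := exists_eval_eq_integral_eval_map μ (Φ p)
  refine ⟨q, fun x => (hq x).trans (integral_congr_ae (.of_forall fun u => ?_))⟩
  have hΦ : (eval x).comp ((map (ContinuousMap.evalAlgHom 𝕜 𝕜 u : C(Ω, 𝕜) →+* 𝕜)).comp ↑Φ) =
      eval (τ u *ᵥ x) := by
    ext i
    · simp [MvPolynomial.algebraMap_apply]
    · simp [Φ, T, mulVec, dotProduct]
  exact DFunLike.congr_fun hΦ p

end Averaging

section HaarAveraging

open MeasureTheory MvPolynomial Matrix

theorem exists_invariant_eval_of_compactSpace {𝕜 G σ : Type*} [RCLike 𝕜] [Fintype σ]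
    [DecidableEq σ] [Group G] [TopologicalSpace G] [IsTopologicalGroup G] [CompactSpace G]
    {τ : G →* Matrix σ σ 𝕜} (hτ : Continuous τ) (p : MvPolynomial σ 𝕜) :
    ∃ q : MvPolynomial σ 𝕜, (∀ u x, eval (τ u *ᵥ x) q = eval x q) ∧ eval 0 q = eval 0 p ∧
      ∀ x, (∀ u, eval (τ u *ᵥ x) p = 0) → eval x q = 0 := by
  borelize G
  let μ : Measure G := Measure.haarMeasure ⊤
  have : IsProbabilityMeasure μ := ⟨Measure.haarMeasure_self⟩
  obtain ⟨q, hq⟩ := exists_eval_eq_integral_eval_mulVec μ (hτ.comp continuous_inv) p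
  refine ⟨q, fun v x => ?_, ?_, fun x hx => ?_⟩
  · rw [hq, ← integral_mul_left_eq_self _ v, hq]
    simp only [Function.comp_apply, mulVec_mulVec, ← map_mul, _root_.mul_inv_rev,
      inv_mul_cancel_right]
  · simp only [hq, mulVec_zero, integral_const, probReal_univ, one_smul]
  · simp only [hq, Function.comp_apply, hx, integral_zero]

end HaarAveraging

section SingularValues

open Matrix

open scoped ComplexOrder

variable {ι 𝕜 : Type*} [RCLike 𝕜] [Fintype ι] [DecidableEq ι]

theorem exists_unitary_mul_diagonal_mul_unitary {A : Matrix ι ι 𝕜} (hA : IsUnit A) :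
    ∃ U ∈ unitaryGroup ι 𝕜, ∃ V ∈ unitaryGroup ι 𝕜, ∃ a : ι → ℝ,
      (∀ i, 0 < a i) ∧ A = U * diagonal (fun i => (a i : 𝕜)) * V := by
  have hpos : (Aᴴ * A).PosDef :=
    PosDef.conjTranspose_mul_self A (mulVec_injective_of_isUnit hA)
  let W := hpos.isHermitian.eigenvectorUnitary
  let a (i : ι) : ℝ := √(hpos.isHermitian.eigenvalues i)
  have ha (i : ι) : 0 < a i := Real.sqrt_pos.2 (hpos.eigenvalues_pos i)
  let D : Matrix ι ι 𝕜 := diagonal fun i => (a i : 𝕜)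
  let E : Matrix ι ι 𝕜 := diagonal fun i => ((a i)⁻¹ : 𝕜)
  have hED : E * D = 1 := by
    have (i : ι) : (a i : 𝕜) ≠ 0 := RCLike.ofReal_ne_zero.2 (ha i).ne'
    simp only [E, D, diagonal_mul_diagonal, inv_mul_cancel₀ (this _), diagonal_one]
  have hspec : star (W : Matrix ι ι 𝕜) * (Aᴴ * A) * W = D * D := by
    rw [← Unitary.conjStarAlgAut_star_apply (S := 𝕜),
      hpos.isHermitian.conjStarAlgAut_star_eigenvectorUnitary, diagonal_mul_diagonal]
    refine congrArg diagonal (funext fun i => ?_)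
    rw [Function.comp_apply, ← RCLike.ofReal_mul, Real.mul_self_sqrt (hpos.eigenvalues_pos i).le]
  have hE : star E = E := by
    simp only [E, star_eq_conjTranspose, diagonal_conjTranspose]
    refine congrArg diagonal (funext fun i => ?_)
    simp
  refine ⟨A * W * E, mem_unitaryGroup_iff'.2 ?_, star W, (star W).2, a, ha, ?_⟩
  · calc star (A * W * E) * (A * W * E)
        = E * (star (W : Matrix ι ι 𝕜) * (Aᴴ * A) * W) * E := by
          simp only [star_mul, hE, star_eq_conjTranspose A, mul_assoc]
      _ = (E * D) * (D * E) := by rw [hspec]; simp only [mul_assoc]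
      _ = 1 := by rw [hED, mul_eq_one_comm.1 hED, one_mul]
  · change A = A * W * E * D * star (W : Matrix ι ι 𝕜)
    rw [mul_assoc (A * _), hED, mul_one, mul_assoc, mem_unitaryGroup_iff.1 W.2, mul_one]

theorem norm_det_eq_one_of_mem_unitaryGroup {U : Matrix ι ι 𝕜} (hU : U ∈ unitaryGroup ι 𝕜) :
    ‖U.det‖ = 1 :=
  CStarRing.norm_of_mem_unitary (det_of_mem_unitary hU)

end SingularValues

section UnitaryTrick

open Matrix Complex Filter Topology

theorem eq_zero_of_forall_eq_zero_mul_I {F : ℂ → ℂ} (hF : AnalyticOnNhd ℂ F Set.univ)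
    (h : ∀ θ : ℝ, F (θ * I) = 0) : F = 0 := by
  have htendsto : Tendsto (fun θ : ℝ => θ * I) (𝓝[≠] 0) (𝓝[≠] ((0 : ℝ) * I)) :=
    (by fun_prop : Continuous fun θ : ℝ => θ * I).continuousWithinAt.tendsto_nhdsWithin
      fun θ hθ => by simpa using hθ
  exact hF.eq_of_frequently_eq analyticOnNhd_const
    (htendsto.frequently (Frequently.of_forall h))

variable {ι : Type*} [Fintype ι] [DecidableEq ι]

theorem diagonal_exp_mul_I_mem_unitaryGroup (b : ι → ℝ) :
    diagonal (fun i => exp (b i * I)) ∈ unitaryGroup ι ℂ := by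
  rw [mem_unitaryGroup_iff, star_eq_conjTranspose, diagonal_conjTranspose, diagonal_mul_diagonal,
    ← diagonal_one]
  refine congrArg diagonal (funext fun i => ?_)
  rw [Pi.star_apply, star_def, ← exp_conj, ← exp_add, map_mul, conj_ofReal, conj_I, mul_neg,
    add_neg_cancel, exp_zero]

theorem exists_unitary_mul_diagonal_exp_mul_unitary_of_det_eq_one {g : Matrix ι ι ℂ}
    (hg : g.det = 1) :
    ∃ U ∈ unitaryGroup ι ℂ, ∃ V ∈ unitaryGroup ι ℂ, ∃ b : ι → ℝ,
      U.det * V.det = 1 ∧ ∑ i, b i = 0 ∧ g = U * diagonal (fun i => exp (b i)) * V := by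
  obtain ⟨U, hU, V, hV, a, ha, hUV⟩ := exists_unitary_mul_diagonal_mul_unitary
    ((isUnit_iff_isUnit_det g).2 (hg ▸ isUnit_one))
  have hdet : U.det * V.det * ∏ i, (a i : ℂ) = 1 := by
    rw [hUV, det_mul, det_mul, det_diagonal, mul_right_comm] at hg
    exact hg
  have hprod : ∏ i, a i = 1 := by
    have h := congrArg norm hdet
    rwa [norm_mul, norm_mul, norm_det_eq_one_of_mem_unitaryGroup hU,
      norm_det_eq_one_of_mem_unitaryGroup hV, one_mul, one_mul, ← ofReal_prod,
      norm_real, Real.norm_of_nonneg (Finset.prod_nonneg fun i _ => (ha i).le), norm_one] at h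
  refine ⟨U, hU, V, hV, fun i => Real.log (a i), ?_, ?_, ?_⟩
  · rwa [← ofReal_prod, hprod, ofReal_one, mul_one] at hdet
  · rw [← Real.log_prod fun i _ => (ha i).ne', hprod, Real.log_one]
  · simp only [← ofReal_exp, Real.exp_log (ha _)]
    exact hUV

theorem analyticOnNhd_eval_mul_diagonal_exp_mul (U V : Matrix ι ι ℂ) (b : ι → ℂ)
    (p : MvPolynomial (ι × ι) ℂ) :
    AnalyticOnNhd ℂ (fun s => MvPolynomial.eval
      (fun ij => (U * diagonal (fun i => exp (s * b i)) * V) ij.1 ij.2) p) Set.univ := by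
  refine fun s _ => AnalyticAt.aeval_mvPolynomial (fun ij => ?_) p
  simp_rw [mul_apply (N := V), mul_diagonal]
  fun_prop

theorem eval_eq_zero_of_forall_specialUnitaryGroup {p : MvPolynomial (ι × ι) ℂ}
    (hp : ∀ u ∈ specialUnitaryGroup ι ℂ, MvPolynomial.eval (fun ij => u ij.1 ij.2) p = 0)
    {g : Matrix ι ι ℂ} (hg : g.det = 1) : MvPolynomial.eval (fun ij => g ij.1 ij.2) p = 0 := by
  obtain ⟨U, hU, V, hV, b, hdet, hb, rfl⟩ :=
    exists_unitary_mul_diagonal_exp_mul_unitary_of_det_eq_one hg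
  have hmem (θ : ℝ) : U * diagonal (fun i => exp (θ * I * b i)) * V ∈ specialUnitaryGroup ι ℂ := by
    have hdiag := diagonal_exp_mul_I_mem_unitaryGroup fun i => θ * b i
    simp only [ofReal_mul, mul_right_comm _ _ I] at hdiag
    refine mem_specialUnitaryGroup_iff.2 ⟨mul_mem (mul_mem hU hdiag) hV, ?_⟩
    rw [det_mul, det_mul, det_diagonal, ← exp_sum, ← Finset.mul_sum, ← ofReal_sum, hb, ofReal_zero,
      mul_zero, exp_zero, mul_one, hdet]
  -- With the singular values `exp bᵢ` of `g` replaced by `exp (s bᵢ)`, `p` becomes an entire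
  -- function of `s`, and imaginary `s` correspond to matrices in `SU_n`.
  have hzero := eq_zero_of_forall_eq_zero_mul_I
    (analyticOnNhd_eval_mul_diagonal_exp_mul U V (fun i => b i) p) fun θ => hp _ (hmem θ)
  simpa only [one_mul, Pi.zero_apply] using congrFun hzero 1

end UnitaryTrick

section SpecialUnitaryGroup

open Matrix

variable {ι 𝕜 : Type*} [RCLike 𝕜] [Fintype ι] [DecidableEq ι]

theorem isCompact_unitaryGroup : IsCompact (unitaryGroup ι 𝕜 : Set (Matrix ι ι 𝕜)) := by
  refine IsCompact.of_isClosed_subset (isCompact_univ_pi fun _ : ι => isCompact_univ_pi fun _ : ι =>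
    isCompact_closedBall (0 : 𝕜) 1) isClosed_unitary fun A hA i _ j _ => ?_
  rw [mem_closedBall_zero_iff]
  exact entry_norm_bound_of_unitary hA i j

instance compactSpace_specialUnitaryGroup : CompactSpace (specialUnitaryGroup ι 𝕜) := by
  have hdet : IsClosed {A : Matrix ι ι 𝕜 | A.det = 1} :=
    isClosed_eq continuous_id.matrix_det continuous_const
  exact isCompact_iff_compactSpace.1 (isCompact_unitaryGroup.inter_right hdet)

instance isTopologicalGroup_specialUnitaryGroup :
    IsTopologicalGroup (specialUnitaryGroup ι 𝕜) where
  continuous_inv := (continuous_star.comp continuous_subtype_val).subtype_mk _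

variable (𝕜 ι) in
/-- The inclusion of `SU_n` into `SL_n`. -/
def specialUnitaryGroupToSL : specialUnitaryGroup ι 𝕜 →* SpecialLinearGroup ι 𝕜 where
  toFun u := ⟨u, (mem_specialUnitaryGroup_iff.1 u.2).2⟩
  map_one' := rfl
  map_mul' _ _ := rfl

end SpecialUnitaryGroup

section PolynomialRepresentation

open Matrix MvPolynomial

variable {ι σ K : Type*} [Fintype ι] [DecidableEq ι] [Fintype σ] [DecidableEq σ] [CommRing K]

/-- A matrix representation of `SL_n` is polynomial if its entries are polynomials in the entries
of the group element. -/
def IsPolynomialRep (τ : SpecialLinearGroup ι K →* Matrix σ σ K) : Prop :=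
  ∃ P : Matrix σ σ (MvPolynomial (ι × ι) K), ∀ g, τ g = P.map (eval fun ij => g ij.1 ij.2)

namespace IsPolynomialRep

theorem exists_eval_eq_eval_mulVec {τ : SpecialLinearGroup ι K →* Matrix σ σ K}
    (hτ : IsPolynomialRep τ) (p : MvPolynomial σ K) (x : σ → K) :
    ∃ q : MvPolynomial (ι × ι) K, ∀ g, eval (fun ij => g ij.1 ij.2) q = eval (τ g *ᵥ x) p := by
  obtain ⟨P, hP⟩ := hτ
  refine ⟨bind₁ (P *ᵥ fun i => C (x i)) p, fun g => ?_⟩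
  have hx : (fun i => eval (fun ij => g ij.1 ij.2) ((P *ᵥ fun i => C (x i)) i)) = τ g *ᵥ x := by
    ext i
    rw [RingHom.map_mulVec, hP]
    simp only [Function.comp_def, eval_C]
  rw [← hx]
  exact eval₂Hom_bind₁ _ _ _ _

theorem continuous [TopologicalSpace K] [IsTopologicalRing K]
    {τ : SpecialLinearGroup ι K →* Matrix σ σ K} (hτ : IsPolynomialRep τ) : Continuous τ := by
  obtain ⟨P, hP⟩ := hτ
  refine continuous_matrix fun i j => ?_
  simp only [hP, map_apply]
  refine (continuous_eval (P i j)).comp (continuous_pi fun ij => ?_)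
  exact continuous_subtype_val.matrix_elem ij.1 ij.2

theorem exists_invariant_eval {τ : SpecialLinearGroup ι ℂ →* Matrix σ σ ℂ}
    (hτ : IsPolynomialRep τ) (p : MvPolynomial σ ℂ) :
    ∃ q : MvPolynomial σ ℂ, (∀ g x, eval (τ g *ᵥ x) q = eval x q) ∧ eval 0 q = eval 0 p ∧
      ∀ x, (∀ g, eval (τ g *ᵥ x) p = 0) → eval x q = 0 := by
  have hcont : Continuous (τ.comp (specialUnitaryGroupToSL ι ℂ)) :=
    hτ.continuous.comp (continuous_subtype_val.subtype_mk _)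
  obtain ⟨q, hinv, h0, hzero⟩ := exists_invariant_eval_of_compactSpace hcont p
  refine ⟨q, fun g x => ?_, h0, fun x hx => hzero x fun u => hx _⟩
  obtain ⟨r, hr⟩ := hτ.exists_eval_eq_eval_mulVec q x
  have hvanish : ∀ u ∈ specialUnitaryGroup ι ℂ,
      eval (fun ij => u ij.1 ij.2) (r - C (eval x q)) = 0 := fun u hu => by
    rw [map_sub, eval_C, sub_eq_zero, ← hinv ⟨u, hu⟩ x]
    exact hr (specialUnitaryGroupToSL ι ℂ ⟨u, hu⟩)
  have h := eval_eq_zero_of_forall_specialUnitaryGroup hvanish g.2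
  rwa [map_sub, eval_C, sub_eq_zero, hr g] at h

theorem zero_mem_zariskiClosure_orbit {τ : SpecialLinearGroup ι ℂ →* Matrix σ σ ℂ}
    (hτ : IsPolynomialRep τ) {w : σ → ℕ} (hw : ∀ i, 0 < w i)
    (hcomm : ∀ g, ∀ z ≠ 0, ∀ x, τ g *ᵥ weightScale w z x = weightScale w z (τ g *ᵥ x))
    {v k : σ → ℂ}
    (hv : zariskiClosure (Set.range fun g => τ g *ᵥ v) ⊆ Set.range fun g => τ g *ᵥ v)
    (hk : k ∈ zariskiClosure (weightCone w (Set.range fun g => τ g *ᵥ v)))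
    (hk' : k ∉ weightCone w (Set.range fun g => τ g *ᵥ v)) :
    0 ∈ zariskiClosure (Set.range fun g => τ g *ᵥ k) := by
  refine mem_zariskiClosure_iff.2 fun p hp => ?_
  by_contra hp0
  obtain ⟨q, hinv, hq0, hzero⟩ := hτ.exists_invariant_eval p
  have hqk : eval k q ≠ eval 0 q := by
    rw [hzero k fun g => hp _ ⟨g, rfl⟩, hq0]
    exact Ne.symm hp0
  obtain ⟨d, hd, hfk⟩ := exists_eval_weightedHomogeneousComponent_ne_zero hw hqk
  have hconst : ∀ a ∈ Set.range fun g => τ g *ᵥ v,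
      eval a (weightedHomogeneousComponent w d q) =
        eval v (weightedHomogeneousComponent w d q) := by
    rintro _ ⟨g, rfl⟩
    exact eval_weightedHomogeneousComponent_of_invariant (hcomm g) (hinv g) d v
  exact hk' (mem_weightCone_of_mem_zariskiClosure_of_eval_ne_zero hv
    (weightedHomogeneousComponent_isWeightedHomogeneous d q) hd hconst hk hfk)

end IsPolynomialRep

end PolynomialRepresentation

section RestrictionToSL

open Matrix MvPolynomial

variable {ι σ K R : Type*} [Fintype ι] [DecidableEq ι] [Fintype σ] [DecidableEq σ]
  [Field K] [CommRing R]

theorem exists_scalar_mul_toGL [IsAlgClosed K] [Nonempty ι] (g : GL ι K) :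
    ∃ (z : Kˣ) (s : SpecialLinearGroup ι K), GeneralLinearGroup.scalar ι z * s.toGL = g := by
  have hdet : g.val.det ≠ 0 := (GeneralLinearGroup.det g).ne_zero
  obtain ⟨z, hz⟩ := IsAlgClosed.exists_pow_nat_eq g.val.det (Fintype.card_pos (α := ι))
  have hz0 : z ≠ 0 := ne_zero_pow Fintype.card_ne_zero (hz ▸ hdet)
  refine ⟨Units.mk0 z hz0, ⟨z⁻¹ • g.val, ?_⟩, Units.ext ?_⟩
  · rw [det_smul, inv_pow, hz, inv_mul_cancel₀ hdet]
  · change Matrix.scalar ι z * (z⁻¹ • g.val) = g.val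
    rw [scalar_apply, ← smul_eq_diagonal_mul, smul_inv_smul₀ hz0]

/-- The restriction to `SL_n` of a representation of `GL_n`, as a matrix representation. -/
def restrictSL (ρ : GL ι R →* GL σ R) : SpecialLinearGroup ι R →* Matrix σ σ R :=
  (Units.coeHom (Matrix σ σ R)).comp (ρ.comp SpecialLinearGroup.toGL)

theorem isPolynomialRep_restrictSL {ρ : GL ι K →* GL σ K}
    {P : σ → σ → MvPolynomial ((ι × ι) ⊕ Unit) K}
    (hP : ∀ g i j, (ρ g).val i j =
      eval (Sum.elim (fun ij => g.val ij.1 ij.2) fun _ => g.val.det⁻¹) (P i j)) :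
    IsPolynomialRep (restrictSL ρ) := by
  refine ⟨Matrix.of fun i j => bind₁ (Sum.elim X 1) (P i j), fun s => ?_⟩
  ext i j
  refine (hP s.toGL i j).trans ?_
  rw [map_apply, of_apply]
  have hsub : (Sum.elim (fun ij => s ij.1 ij.2) fun _ : Unit => (s : Matrix ι ι K).det⁻¹) =
      fun t => eval (fun ij : ι × ι => s ij.1 ij.2) (Sum.elim X 1 t) := by
    rw [s.det_coe, inv_one]
    funext t
    rcases t with ij | _
    · simp only [Sum.elim_inl, eval_X]
    · simp only [Sum.elim_inr, Pi.one_apply, map_one]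
  exact (congrArg (eval · (P i j)) hsub).trans (eval₂Hom_bind₁ _ _ _ _).symm

variable {ρ : GL ι R →* GL σ R} {w : σ → ℕ}

theorem setOf_det_eq_one_mulVec_eq_range (v : σ → R) :
    {x | ∃ g : GL ι R, g.val.det = 1 ∧ x = (ρ g).val *ᵥ v} =
      Set.range fun s => restrictSL ρ s *ᵥ v := by
  ext x
  constructor
  · rintro ⟨g, hg, rfl⟩
    exact ⟨⟨g.val, hg⟩, congrArg (fun h => (ρ h).val *ᵥ v) (Units.ext rfl)⟩
  · rintro ⟨s, rfl⟩
    exact ⟨s.toGL, s.2, rfl⟩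

theorem map_scalar_mul_mulVec
    (hρ : ∀ z : Rˣ, (ρ (GeneralLinearGroup.scalar ι z)).val = diagonal fun i => (z : R) ^ w i)
    (z : Rˣ) (g : GL ι R) (x : σ → R) :
    (ρ (GeneralLinearGroup.scalar ι z * g)).val *ᵥ x = weightScale w (z : R) ((ρ g).val *ᵥ x) := by
  rw [map_mul, Units.val_mul, ← mulVec_mulVec, hρ, weightScale_eq_diagonal_mulVec]

theorem restrictSL_mulVec_weightScale
    (hρ : ∀ z : Rˣ, (ρ (GeneralLinearGroup.scalar ι z)).val = diagonal fun i => (z : R) ^ w i)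
    (s : SpecialLinearGroup ι R) (z : Rˣ) (x : σ → R) :
    restrictSL ρ s *ᵥ weightScale w (z : R) x = weightScale w (z : R) (restrictSL ρ s *ᵥ x) :=
  calc restrictSL ρ s *ᵥ weightScale w (z : R) x
      = (ρ (s.toGL * GeneralLinearGroup.scalar ι z)).val *ᵥ x := by
        rw [weightScale_eq_diagonal_mulVec, ← hρ, mulVec_mulVec, map_mul, Units.val_mul]
        rfl
    _ = weightScale w (z : R) (restrictSL ρ s *ᵥ x) := by
        rw [← GeneralLinearGroup.scalar_commute]
        exact map_scalar_mul_mulVec hρ z s.toGL x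

theorem setOf_mulVec_eq_weightCone [IsAlgClosed K] [Nonempty ι] {ρ : GL ι K →* GL σ K}
    (hρ : ∀ z : Kˣ, (ρ (GeneralLinearGroup.scalar ι z)).val = diagonal fun i => (z : K) ^ w i)
    (v : σ → K) :
    {x | ∃ g : GL ι K, x = (ρ g).val *ᵥ v} =
      weightCone w (Set.range fun s => restrictSL ρ s *ᵥ v) := by
  ext x
  constructor
  · rintro ⟨g, rfl⟩
    obtain ⟨z, s, rfl⟩ := exists_scalar_mul_toGL g
    exact ⟨z, z.ne_zero, _, ⟨s, rfl⟩, (map_scalar_mul_mulVec hρ z _ v).symm⟩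
  · rintro ⟨z, hz, _, ⟨s, rfl⟩, rfl⟩
    exact ⟨_, (map_scalar_mul_mulVec hρ (Units.mk0 z hz) _ v).symm⟩

end RestrictionToSL

/-- let `ρ : GL_n(ℂ) → GL_N(ℂ)` be a homomorphism which is a morphism of
varieties (entries of `ρ(g)` are fixed polynomials in the entries of `g` and `det(g)⁻¹`)
and under which the central `ℂˣ` acts with positive weights. Let `w₀ ≠ 0` have Zariski
closed `SL_n(ℂ)`-orbit. Then every point `k` of `closure(ρ(GL_n(ℂ))·w₀) \ ρ(GL_n(ℂ))·w₀`
is `SL_n(ℂ)`-unstable: `0` lies in the Zariski closure of `ρ(SL_n(ℂ))·k`. -/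
theorem stmt_9 {n N : ℕ} (hn : 1 ≤ n) (hN : 1 ≤ N)
    (ρ : Matrix.GeneralLinearGroup (Fin n) ℂ →* Matrix.GeneralLinearGroup (Fin N) ℂ)
    (P : Fin N → Fin N → MvPolynomial ((Fin n × Fin n) ⊕ Unit) ℂ)
    (hpoly : ∀ (g : Matrix.GeneralLinearGroup (Fin n) ℂ) (i j : Fin N),
      (↑(ρ g) : Matrix (Fin N) (Fin N) ℂ) i j =
        MvPolynomial.eval
          (Sum.elim (fun p : Fin n × Fin n => (↑g : Matrix (Fin n) (Fin n) ℂ) p.1 p.2)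
            (fun _ => ((↑g : Matrix (Fin n) (Fin n) ℂ).det)⁻¹)) (P i j))
    (w : Fin N → ℕ) (hw : ∀ i, 0 < w i)
    (hcentral : ∀ (z : ℂˣ) (g : Matrix.GeneralLinearGroup (Fin n) ℂ),
      (↑g : Matrix (Fin n) (Fin n) ℂ) = (z : ℂ) • (1 : Matrix (Fin n) (Fin n) ℂ) →
      (↑(ρ g) : Matrix (Fin N) (Fin N) ℂ) = Matrix.diagonal fun i => (z : ℂ) ^ w i)
    (w₀ : Fin N → ℂ) (hw₀ : w₀ ≠ 0)
    (hclosed : IsZariskiClosed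
      {x | ∃ g : Matrix.GeneralLinearGroup (Fin n) ℂ,
        (↑g : Matrix (Fin n) (Fin n) ℂ).det = 1 ∧
          x = (↑(ρ g) : Matrix (Fin N) (Fin N) ℂ).mulVec w₀})
    (k : Fin N → ℂ)
    -- `k` lies in the Zariski closure of the `GL_n(ℂ)`-orbit of `w₀` …
    (hk : ∀ C : Set (Fin N → ℂ), IsZariskiClosed C →
      {x | ∃ g : Matrix.GeneralLinearGroup (Fin n) ℂ,
        x = (↑(ρ g) : Matrix (Fin N) (Fin N) ℂ).mulVec w₀} ⊆ C → k ∈ C)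
    -- … but not in the orbit itself.
    (hk' : k ∉ {x | ∃ g : Matrix.GeneralLinearGroup (Fin n) ℂ,
      x = (↑(ρ g) : Matrix (Fin N) (Fin N) ℂ).mulVec w₀}) :
    ∀ C : Set (Fin N → ℂ), IsZariskiClosed C →
      {x | ∃ g : Matrix.GeneralLinearGroup (Fin n) ℂ,
        (↑g : Matrix (Fin n) (Fin n) ℂ).det = 1 ∧
          x = (↑(ρ g) : Matrix (Fin N) (Fin N) ℂ).mulVec k} ⊆ C →
      (0 : Fin N → ℂ) ∈ C := by
  have : Nonempty (Fin n) := ⟨⟨0, hn⟩⟩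
  have hscalar (z : ℂˣ) : (ρ (Matrix.GeneralLinearGroup.scalar (Fin n) z)).val =
      Matrix.diagonal fun i => (z : ℂ) ^ w i :=
    hcentral z _ (Matrix.smul_one_eq_diagonal (z : ℂ)).symm
  rw [setOf_mulVec_eq_weightCone hscalar] at hk hk'
  rw [setOf_det_eq_one_mulVec_eq_range] at hclosed ⊢
  intro C hC hkC
  refine hC.zariskiClosure_subset hkC ?_
  exact (isPolynomialRep_restrictSL hpoly).zero_mem_zariskiClosure_orbit hw
    (fun g z hz => restrictSL_mulVec_weightScale hscalar g (Units.mk0 z hz))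
    (hclosed.zariskiClosure_subset subset_rfl)
    (hk _ (isZariskiClosed_zariskiClosure _) (subset_zariskiClosure _)) hk'
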